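/- Let (W, S) be an arbitrary Coxeter system, let w ∈ W_c be fully commutative, and let I = {s, t} ⊆ S be a pair of generators with m(s,t) ≥ 3. If ^*w (respectively _*w, w^*, w_*) is defined, then ^*w (respectively _*w, w^*, w_*) lies in W_c. -/

import Mathlib

open CoxeterSystem

variable {B W : Type*} [Group W] {M : CoxeterMatrix B} (cs : CoxeterSystem M W)

/-- `m(s,t) ≥ 3`: `s` and `t` are distinct noncommuting generators
(`M s t = 0` encodes `m(s,t) = ∞`). -/
def Noncomm (M : CoxeterMatrix B) (s t : B) : Prop := M s t = 0 ∨ 3 ≤ M s t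

/-- The longest element `w_{st}` of the rank-2 parabolic subgroup `⟨s,t⟩`
(meaningful when `3 ≤ M s t < ∞`). -/
def longest (s t : B) : W := cs.wordProd (alternatingWord s t (M s t))

/-- `w` is complex: it admits a reduced factorization `x₁ · w_{st} · x₂` where `w_{st}`
is the longest element of a rank-2 parabolic subgroup `⟨s,t⟩` with `3 ≤ m(s,t) < ∞`. -/
def IsComplex (w : W) : Prop :=
  ∃ s t : B, 3 ≤ M s t ∧ ∃ x₁ x₂ : W,
    w = x₁ * longest cs s t * x₂ ∧
    cs.length w = cs.length x₁ + cs.length (longest cs s t : W) + cs.length x₂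

/-- `w` is fully commutative, i.e. `w ∈ W_c`. -/
def FullyComm (w : W) : Prop := ¬ IsComplex cs w

/-- `x` is weakly complex: `x` is complex and `x = s·u` reduced with `u` fully commutative. -/
def IsWeaklyComplex (x : W) : Prop :=
  IsComplex cs x ∧ ∃ (s : B) (u : W), FullyComm cs u ∧ x = cs.simple s * u ∧
    cs.length x = 1 + cs.length u

/-- The alternating product `t s t s ⋯` with `k` factors, beginning with `t`. -/
def altProd (t s : B) (k : ℕ) : W :=
  cs.wordProd ((List.range k).map (fun i => if i % 2 = 0 then t else s))

/-- The left descent set `𝓛(w)`. -/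
def leftDescents (w : W) : Set B := {i | cs.IsLeftDescent w i}

/-- The right descent set `𝓡(w)`. -/
def rightDescents (w : W) : Set B := {i | cs.IsRightDescent w i}

/-- `w` is a reduced product of distinct pairwise commuting generators. -/
def IsCommProd (w : W) : Prop :=
  ∃ l : List B, l.Nodup ∧ (∀ u ∈ l, ∀ u' ∈ l, u ≠ u' → M u u' = 2) ∧
    cs.IsReduced l ∧ w = cs.wordProd l

/-- `y` is left star reducible to `x` with respect to the pair `{s,t}`:
`x` and `y` lie in the same left `{s,t}`-string and `ℓ(x) = ℓ(y) − 1`. -/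
def LeftStarReducible (s t : B) (y x : W) : Prop :=
  Noncomm M s t ∧
  ((cs.IsLeftDescent y s ∧ ¬ cs.IsLeftDescent y t ∧ x = cs.simple s * y ∧
      cs.IsLeftDescent x t) ∨
   (cs.IsLeftDescent y t ∧ ¬ cs.IsLeftDescent y s ∧ x = cs.simple t * y ∧
      cs.IsLeftDescent x s))

/-- `y` is right star reducible to `x` with respect to the pair `{s,t}`. -/
def RightStarReducible (s t : B) (y x : W) : Prop :=
  Noncomm M s t ∧
  ((cs.IsRightDescent y s ∧ ¬ cs.IsRightDescent y t ∧ x = y * cs.simple s ∧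
      cs.IsRightDescent x t) ∨
   (cs.IsRightDescent y t ∧ ¬ cs.IsRightDescent y s ∧ x = y * cs.simple t ∧
      cs.IsRightDescent x s))

/-- `y` is star reducible to `x`: there is a (possibly empty) chain of left and right
star reductions from `y` to `x`. -/
def StarReducible (y x : W) : Prop :=
  Relation.ReflTransGen
    (fun a b => ∃ s t : B, LeftStarReducible cs s t a b ∨ RightStarReducible cs s t a b) y x

/-- Property F: every fully commutative element is star reducible to a reduced product of
distinct pairwise commuting generators. -/
def PropertyF : Prop := ∀ w : W, FullyComm cs w → ∃ x : W, StarReducible cs w x ∧ IsCommProd cs x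

/-- `n(w)`: the maximum `k` such that `w` admits a reduced factorization `w = w₁·w₂·w₃`
with `w₂` a reduced product of `k` distinct pairwise commuting generators. -/
noncomputable def nval (w : W) : ℕ :=
  sSup {k | ∃ w₁ w₂ w₃ : W, w = w₁ * w₂ * w₃ ∧
    cs.length w = cs.length w₁ + cs.length w₂ + cs.length w₃ ∧
    IsCommProd cs w₂ ∧ cs.length w₂ = k}

/-- The Bruhat order: `x ≤ w` iff some reduced word for `w` has a subword that is a
reduced word for `x`. -/
def BruhatLE (x w : W) : Prop :=
  ∃ l l' : List B, cs.IsReduced l ∧ cs.wordProd l = w ∧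
    l'.Sublist l ∧ cs.IsReduced l' ∧ cs.wordProd l' = x

/-- `w = wI · wII` is the coset decomposition of `w` with respect to `I = {s,t}`:
`wI ∈ W_I`, `𝓛(wII) ∩ I = ∅` and `ℓ(w) = ℓ(wI) + ℓ(wII)`. -/
def CosetDecompL (s t : B) (w wI wII : W) : Prop :=
  w = wI * wII ∧ wI ∈ Subgroup.closure {cs.simple s, cs.simple t} ∧
  ¬ cs.IsLeftDescent wII s ∧ ¬ cs.IsLeftDescent wII t ∧
  cs.length w = cs.length wI + cs.length wII

/-- `w = wII · wI` is the right coset decomposition of `w` with respect to `I = {s,t}`: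
`wI ∈ W_I`, `𝓡(wII) ∩ I = ∅` and `ℓ(w) = ℓ(wII) + ℓ(wI)`. -/
def CosetDecompR (s t : B) (w wII wI : W) : Prop :=
  w = wII * wI ∧ wI ∈ Subgroup.closure {cs.simple s, cs.simple t} ∧
  ¬ cs.IsRightDescent wII s ∧ ¬ cs.IsRightDescent wII t ∧
  cs.length w = cs.length wII + cs.length wI

/-- `k_ε(J) = (−1)^{|J ∩ ε⁻¹(0)|}` for a set `J` of generators. -/
noncomputable def kSet (ε : B → Bool) (J : Set B) : ℤ :=
  (-1) ^ (J ∩ {i | ε i = false}).ncard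

/-- `k_ε(w) = k_ε(𝓛(w)) · k_ε(𝓡(w))`. -/
noncomputable def kElt (ε : B → Bool) (w : W) : ℤ :=
  kSet ε (leftDescents cs w) * kSet ε (rightDescents cs w)

/-!
A complex element contains a longest element `w_{ab}` as a factor, so the removal of a right
descent preserves full commutativity, and passing to inverses exchanges left and right. The point
is to show that `y` is fully commutative when `y * s` is, where `s ∈ 𝓡(y)`, `t ∈ 𝓡(y * s)`,
`t ∉ 𝓡(y)` and `s`, `t` do not commute.

Suppose that `y = x₁ * w_{ab} * x` is reduced. By the strong exchange property `y * s` arises from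
`y` by deleting a letter, which must lie in `w_{ab}` because `y * s` is not complex; after possibly
exchanging `a` and `b` this means `x * s = b * x`. So `w_{ab} = p * b * a * b` gives
`y * s = x₁ * p * b * a * x`, and `t` is a right descent of this fully commutative element.
In a fully commutative element a right descent either occurs in a right-hand factor or commutes
with that factor. Thus `t ∈ 𝓡(x)`, or `t = a` commutes with `x`, or `t` commutes with both `x` and
`b`. In the first two cases `t ∈ 𝓡(y)`; in the third, `t` commutes with `s = x⁻¹ * b * x`.

Strong exchange comes from the action of `W` on signed reflections: the sign of `t` changes under
`w` exactly when `ℓ(w * t) < ℓ(w)`. That `s * t` has order exactly `m(s,t)` comes from the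
geometric representation.
-/

section Reflections

open Module

-- Any solution of the recurrence will do: `sin (n * θ)` and `n` are the two instances needed.
theorem smul_reflection_mul_reflection_pow_apply_self {R V : Type*} [CommRing R] [AddCommGroup V]
    [Module R V] {x y : V} {f g : Dual R V} (hf : f x = 2) (hg : g y = 2) {c : R}
    (hfy : f y = -c) (hgx : g x = -c) {a : ℕ → R} (ha₀ : a 0 = 0)
    (ha : ∀ n, a (n + 2) = c * a (n + 1) - a n) (k : ℕ) :
    a 1 • ((reflection hf * reflection hg) ^ k) x = a (2 * k + 1) • x + a (2 * k) • y := by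
  induction k with
  | zero => simp [ha₀]
  | succ k ih =>
    rw [pow_succ', LinearEquiv.mul_apply, ← map_smul, ih, LinearEquiv.mul_apply,
      show 2 * (k + 1) + 1 = 2 * k + 1 + 2 by ring, show 2 * (k + 1) = 2 * k + 2 by ring, ha, ha]
    simp only [reflection_apply, map_add, map_sub, map_smul, hf, hg, hfy, hgx]
    module

theorem reflection_mul_reflection_pow_eq_one {K V : Type*} [Field K] [AddCommGroup V]
    [Module K V] {x y : V} {f g : Dual K V} (hf : f x = 2) (hg : g y = 2) {c : K}
    (hfy : f y = -c) (hgx : g x = -c) (hc : 4 - c ^ 2 ≠ 0) {a : ℕ → K} (ha₀ : a 0 = 0)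
    (ha₁ : a 1 ≠ 0) (ha : ∀ n, a (n + 2) = c * a (n + 1) - a n) {m : ℕ} (ham : a (2 * m) = 0)
    (ham' : a (2 * m + 1) = a 1) : (reflection hf * reflection hg) ^ m = 1 := by
  have hx : ((reflection hf * reflection hg) ^ m) x = x := by
    have h := smul_reflection_mul_reflection_pow_apply_self hf hg hfy hgx ha₀ ha m
    rw [ham, ham', zero_smul, add_zero] at h
    exact smul_right_injective V ha₁ h
  have hy : ((reflection hf * reflection hg) ^ m) y = y := by
    have h := smul_reflection_mul_reflection_pow_apply_self hg hf hgx hfy ha₀ ha m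
    rw [ham, ham', zero_smul, add_zero] at h
    have hinv : (reflection hf * reflection hg) ^ m * (reflection hg * reflection hf) ^ m = 1 := by
      rw [mul_eq_one_iff_eq_inv, ← inv_pow,
        mul_inv_rev, reflection_inv, reflection_inv]
    calc ((reflection hf * reflection hg) ^ m) y
        = ((reflection hf * reflection hg) ^ m) (((reflection hg * reflection hf) ^ m) y) := by
          rw [smul_right_injective V ha₁ h]
      _ = y := by rw [← LinearEquiv.mul_apply, hinv]; rfl
  have hker (z : V) (hfz : f z = 0) (hgz : g z = 0) :
      ((reflection hf * reflection hg) ^ m) z = z := by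
    rw [LinearEquiv.pow_apply]
    exact Function.iterate_fixed (by simp [reflection_apply, hfz, hgz]) m
  ext z
  set p := (2 * f z + c * g z) / (4 - c ^ 2) with hp
  set q := (c * f z + 2 * g z) / (4 - c ^ 2) with hq
  have hz : z = p • x + q • y + (z - (p • x + q • y)) := by abel
  have hz' := hker (z - (p • x + q • y))
    (by simp only [map_sub, map_add, map_smul, hf, hfy, smul_eq_mul, hp, hq]; field_simp; ring)
    (by simp only [map_sub, map_add, map_smul, hg, hgx, smul_eq_mul, hp, hq]; field_simp; ring)
  rw [hz, map_add, map_add, map_smul, map_smul, hx, hy, hz']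
  rfl

end Reflections

section GeometricRepresentation

variable (M)

/-- The coroot of the `i`-th generator: twice the pairing with the `i`-th basis vector under the
bilinear form `(eᵢ, eⱼ) ↦ -cos (π / M i j)`. The convention `π / 0 = 0` gives the entry `-1` when
`M i j = 0`, as it should for `m(i, j) = ∞`. -/
noncomputable def simpleCoroot (i : B) : Module.Dual ℝ (B →₀ ℝ) :=
  Finsupp.linearCombination ℝ fun j => -(2 * Real.cos (Real.pi / M i j))

theorem simpleCoroot_single (i j : B) :
    simpleCoroot M i (Finsupp.single j 1) = -(2 * Real.cos (Real.pi / M i j)) := by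
  simp [simpleCoroot]

theorem simpleCoroot_single_self (i : B) : simpleCoroot M i (Finsupp.single i 1) = 2 := by
  simp [simpleCoroot_single]

/-- The reflection by which the `i`-th generator acts in the geometric representation. -/
noncomputable def simpleReflection (i : B) : (B →₀ ℝ) ≃ₗ[ℝ] (B →₀ ℝ) :=
  Module.reflection (simpleCoroot_single_self M i)

theorem simpleCoroot_single_comm (i j : B) :
    simpleCoroot M j (Finsupp.single i 1) = -(2 * Real.cos (Real.pi / M i j)) := by
  rw [simpleCoroot_single, M.symmetric]

theorem sin_add_two_mul (θ : ℝ) (n : ℕ) :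
    Real.sin ((n + 2 : ℕ) * θ) =
      2 * Real.cos θ * Real.sin ((n + 1 : ℕ) * θ) - Real.sin (n * θ) := by
  have h₁ : ((n + 2 : ℕ) : ℝ) * θ = (n + 1 : ℕ) * θ + θ := by push_cast; ring
  have h₂ : (n : ℝ) * θ = (n + 1 : ℕ) * θ - θ := by push_cast; ring
  rw [h₁, h₂, Real.sin_add, Real.sin_sub]
  ring

theorem sin_pi_div_pos {m : ℕ} (hm : 2 ≤ m) : 0 < Real.sin (Real.pi / m) := by
  have hm' : (1 : ℝ) < m := by exact_mod_cast hm
  exact Real.sin_pos_of_pos_of_lt_pi (by positivity) (div_lt_self Real.pi_pos hm')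

theorem isLiftable_simpleReflection : M.IsLiftable (simpleReflection M) := by
  intro i j
  obtain hm | hm | hm : M i j = 0 ∨ M i j = 1 ∨ 2 ≤ M i j := by omega
  · rw [hm, pow_zero]
  · obtain rfl : i = j := by_contra fun h => M.off_diagonal i j h hm
    rw [hm, pow_one, mul_eq_one_iff_eq_inv, simpleReflection, Module.reflection_inv]
  · have hsin := sin_pi_div_pos hm
    have hmθ : (M i j : ℝ) * (Real.pi / M i j) = Real.pi := by
      field_simp [show (M i j : ℝ) ≠ 0 by positivity]
    refine reflection_mul_reflection_pow_eq_one _ _ (simpleCoroot_single M i j)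
      (simpleCoroot_single_comm M i j) ?_ (a := fun n => Real.sin (n * (Real.pi / M i j))) (by simp)
      (by simpa using hsin.ne') (sin_add_two_mul _) ?_ ?_
    · nlinarith [Real.sin_sq_add_cos_sq (Real.pi / M i j)]
    · push_cast
      rw [mul_assoc, hmθ, Real.sin_two_pi]
    · push_cast
      rw [add_mul, mul_assoc, hmθ, add_comm, Real.sin_add_two_pi]

theorem dvd_of_simpleReflection_mul_pow_eq_one {i j : B} {k : ℕ}
    (hk : (simpleReflection M i * simpleReflection M j) ^ k = 1) : M i j ∣ k := by
  rcases eq_or_ne i j with rfl | hij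
  · simp
  have hcoord {a : ℕ → ℝ} (ha₀ : a 0 = 0)
      (ha : ∀ n, a (n + 2) = 2 * Real.cos (Real.pi / M i j) * a (n + 1) - a n) :
      a (2 * k) = 0 ∧ a (2 * k + 1) = a 1 := by
    have h := smul_reflection_mul_reflection_pow_apply_self (simpleCoroot_single_self M i)
      (simpleCoroot_single_self M j) (simpleCoroot_single M i j) (simpleCoroot_single_comm M i j)
      ha₀ ha k
    change a 1 • ((simpleReflection M i * simpleReflection M j) ^ k) _ = _ at h
    rw [hk] at h
    have hi := DFunLike.congr_fun h i
    have hj := DFunLike.congr_fun h j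
    exact ⟨by simpa [hij.symm] using hj.symm, by simpa [hij] using hi.symm⟩
  obtain hm | hm : M i j = 0 ∨ 2 ≤ M i j := by
    have := M.off_diagonal i j hij
    omega
  · have h := (hcoord (a := fun n => n) (by simp) fun n => by simp [hm]; ring).1
    rw [hm, zero_dvd_iff]
    simpa using h
  · have hsin := sin_pi_div_pos hm
    set θ := Real.pi / M i j with hθ
    obtain ⟨h₀, h₁⟩ := hcoord (a := fun n => Real.sin (n * θ)) (by simp) (sin_add_two_mul θ)
    have hcos : Real.cos ((2 * k : ℕ) * θ) = 1 := by
      rw [Nat.cast_succ, add_mul, Real.sin_add, h₀, zero_mul, zero_add, Nat.cast_one, one_mul,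
        mul_eq_right₀ hsin.ne'] at h₁
      exact h₁
    obtain ⟨n, hn⟩ := (Real.cos_eq_one_iff _).mp hcos
    have hkn : (k : ℝ) = M i j * n := by
      rw [hθ] at hn
      push_cast at hn
      field_simp at hn
      linarith
    exact Int.natCast_dvd_natCast.mp ⟨n, by exact_mod_cast hkn⟩

end GeometricRepresentation

theorem orderOf_simple_mul_simple (i j : B) : orderOf (cs.simple i * cs.simple j) = M i j := by
  refine Nat.dvd_antisymm (orderOf_dvd_of_pow_eq_one (cs.simple_mul_simple_pow i j))
    (dvd_of_simpleReflection_mul_pow_eq_one M ?_)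
  have h := congr_arg (cs.lift ⟨_, isLiftable_simpleReflection M⟩)
    (pow_orderOf_eq_one (cs.simple i * cs.simple j))
  simpa only [map_pow, map_mul, map_one, cs.lift_apply_simple (isLiftable_simpleReflection M)]
    using h

theorem simple_injective : Function.Injective cs.simple := by
  intro i j hij
  by_contra h
  refine M.off_diagonal i j h ?_
  rw [← orderOf_simple_mul_simple cs, hij, simple_mul_simple_self, orderOf_one]


section Exchange

theorem prod_map_alternatingWord {G : Type*} [Monoid G] (f : B → G) (i j : B) (n : ℕ) :
    ((alternatingWord i j (2 * n)).map f).prod = (f i * f j) ^ n := by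
  induction n with
  | zero => simp [alternatingWord]
  | succ n ih =>
    rw [show 2 * (n + 1) = 2 * n + 1 + 1 by ring, alternatingWord_succ', alternatingWord_succ',
      if_pos (even_two_mul n), if_neg (by simp), List.map_cons, List.map_cons, List.prod_cons,
      List.prod_cons, ih, pow_succ', mul_assoc]

theorem rightInvSeq_alternatingWord (i j : B) (k : ℕ) :
    cs.rightInvSeq (alternatingWord i j k) =
      ((List.range k).map fun p => cs.simple j * (cs.simple i * cs.simple j) ^ p).reverse := by
  induction k generalizing i j with
  | zero => simp [alternatingWord]
  | succ k ih =>
    rw [alternatingWord_succ, rightInvSeq_concat, ih, List.range_succ_eq_map]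
    simp only [List.map_reverse, List.map_map, List.map_cons, List.reverse_cons, pow_zero, mul_one,
      List.concat_eq_append]
    congr 3
    funext p
    have h : SemiconjBy (cs.simple j) (cs.simple i * cs.simple j) (cs.simple j * cs.simple i) :=
      (mul_assoc _ _ _).symm
    simp only [Function.comp_apply, MulAut.conj_apply, inv_simple, (h.pow_right _).eq, pow_succ']
    simp only [mul_assoc]

open scoped Classical in
/-- The `i`-th generator acts on signed elements of `W` by conjugation, flipping the sign of
`cs.simple i`. On signed reflections this is the action of `W` on the root system. -/
noncomputable def signedConj (i : B) : Equiv.Perm (W × ZMod 2) :=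
  Function.Involutive.toPerm
    (fun p => (cs.simple i * p.1 * cs.simple i, p.2 + if p.1 = cs.simple i then 1 else 0)) <| by
    rintro ⟨r, ε⟩
    have h : cs.simple i * r * cs.simple i = cs.simple i ↔ r = cs.simple i := by
      rw [mul_eq_right, mul_eq_one_iff_inv_eq, inv_simple, eq_comm]
    refine Prod.ext ?_ ?_
    · simp [mul_assoc]
    · simp only [h, add_assoc, CharTwo.add_self_eq_zero, add_zero]

open scoped Classical in
theorem signedConj_apply (i : B) (r : W) (ε : ZMod 2) :
    signedConj cs i (r, ε) =
      (cs.simple i * r * cs.simple i, ε + if r = cs.simple i then 1 else 0) := rfl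

open scoped Classical in
theorem prod_map_signedConj_apply (ω : List B) (r : W) (ε : ZMod 2) :
    (ω.map (signedConj cs)).prod (r, ε) =
      (cs.wordProd ω * r * (cs.wordProd ω)⁻¹, ε + (cs.rightInvSeq ω).count r) := by
  induction ω with
  | nil => simp
  | cons i ω ih =>
    have h : cs.wordProd ω * r * (cs.wordProd ω)⁻¹ = cs.simple i ↔
        (cs.wordProd ω)⁻¹ * cs.simple i * cs.wordProd ω = r := by
      rw [mul_inv_eq_iff_eq_mul, ← eq_inv_mul_iff_mul_eq, mul_assoc, eq_comm]
    rw [List.map_cons, List.prod_cons, Equiv.Perm.mul_apply, ih]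
    simp only [signedConj_apply, rightInvSeq, List.count_cons, h, beq_iff_eq]
    refine Prod.ext ?_ ?_
    · simp [wordProd_cons, mul_assoc]
    · push_cast
      simp only [add_assoc]

theorem isLiftable_signedConj : M.IsLiftable (signedConj cs) := by
  classical
  intro i j
  -- The inversion sequence of `(s_i s_j)^m` is periodic with period `m = M i j`.
  have hcount (r : W) :
      Even ((cs.rightInvSeq (alternatingWord i j (2 * M i j))).count r) := by
    rw [rightInvSeq_alternatingWord, List.count_reverse, two_mul, List.range_add, List.map_append,
      List.map_map, List.count_append]
    simp only [Function.comp_def, pow_add, simple_mul_simple_pow, one_mul]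
    exact ⟨_, rfl⟩
  have hprod : cs.wordProd (alternatingWord i j (2 * M i j)) = 1 := by
    rw [wordProd, prod_map_alternatingWord, simple_mul_simple_pow]
  ext1 ⟨r, ε⟩
  rw [← prod_map_alternatingWord, prod_map_signedConj_apply, hprod,
    (ZMod.natCast_eq_zero_iff_even).mpr (hcount r)]
  simp

/-- The action of `W` on its signed elements extending `signedConj`. -/
noncomputable def signedConjHom : W →* Equiv.Perm (W × ZMod 2) :=
  cs.lift ⟨signedConj cs, isLiftable_signedConj cs⟩

theorem signedConjHom_simple (i : B) : signedConjHom cs (cs.simple i) = signedConj cs i :=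
  cs.lift_apply_simple (isLiftable_signedConj cs) i

open scoped Classical in
theorem signedConjHom_wordProd_apply (ω : List B) (r : W) (ε : ZMod 2) :
    signedConjHom cs (cs.wordProd ω) (r, ε) =
      (cs.wordProd ω * r * (cs.wordProd ω)⁻¹, ε + (cs.rightInvSeq ω).count r) := by
  rw [← prod_map_signedConj_apply, wordProd, map_list_prod, List.map_map]
  simp only [Function.comp_def, signedConjHom_simple]

theorem signedConjHom_apply_fst (w r : W) (ε : ZMod 2) :
    (signedConjHom cs w (r, ε)).1 = w * r * w⁻¹ := by
  obtain ⟨ω, -, rfl⟩ := cs.exists_isReduced w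
  rw [signedConjHom_wordProd_apply]

theorem signedConjHom_apply_snd (w r : W) (ε : ZMod 2) :
    (signedConjHom cs w (r, ε)).2 = ε + (signedConjHom cs w (r, 0)).2 := by
  obtain ⟨ω, -, rfl⟩ := cs.exists_isReduced w
  simp only [signedConjHom_wordProd_apply, zero_add]

variable {cs}

theorem signedConjHom_apply_self {t : W} (ht : cs.IsReflection t) (ε : ZMod 2) :
    signedConjHom cs t (t, ε) = (t, ε + 1) := by
  obtain ⟨w, i, rfl⟩ := ht
  set t := w * cs.simple i * w⁻¹ with ht
  obtain ⟨δ, hδ⟩ : ∃ δ, signedConjHom cs w⁻¹ (t, ε) = (cs.simple i, δ) :=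
    ⟨_, Prod.ext (by rw [signedConjHom_apply_fst, ht]; group) rfl⟩
  have hwi : signedConjHom cs w (cs.simple i, δ) = (t, ε) := by
    rw [← hδ, ← Equiv.Perm.mul_apply, ← map_mul, mul_inv_cancel, map_one, Equiv.Perm.one_apply]
  have hδε : δ + (signedConjHom cs w (cs.simple i, 0)).2 = ε := by
    rw [← signedConjHom_apply_snd, hwi]
  have ht' : signedConjHom cs t (t, ε) = signedConjHom cs w (cs.simple i, δ + 1) := by
    nth_rw 1 [ht]
    rw [map_mul, map_mul, Equiv.Perm.mul_apply, Equiv.Perm.mul_apply, hδ, signedConjHom_simple,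
      signedConj_apply, if_pos rfl, simple_mul_simple_self, one_mul]
  rw [ht']
  refine Prod.ext ?_ ?_
  · rw [signedConjHom_apply_fst]
  · rw [signedConjHom_apply_snd, ← hδε]
    ring

theorem mem_rightInvSeq_of_isRightInversion {ω : List B} {t : W}
    (h : cs.IsRightInversion (cs.wordProd ω) t) : t ∈ cs.rightInvSeq ω := by
  classical
  by_contra hmem
  obtain ⟨ω', hω', hw⟩ := cs.exists_isReduced (cs.wordProd ω * t)
  have hmem' : t ∈ cs.rightInvSeq ω' := by
    have hcount := congr_arg Prod.snd (signedConjHom_wordProd_apply cs ω' t 0)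
    rw [← hw, map_mul, Equiv.Perm.mul_apply, signedConjHom_apply_self h.1,
      signedConjHom_wordProd_apply, List.count_eq_zero_of_not_mem hmem] at hcount
    by_contra hmem'
    simp [List.count_eq_zero_of_not_mem hmem'] at hcount
  have hlt := (cs.isRightInversion_of_mem_rightInvSeq hω' hmem').2
  rw [← hw, mul_assoc, h.1.mul_self, mul_one] at hlt
  exact hlt.not_gt h.2

theorem rightInvSeq_append (ω ω' : List B) :
    cs.rightInvSeq (ω ++ ω') =
      (cs.rightInvSeq ω).map (fun r => (cs.wordProd ω')⁻¹ * r * cs.wordProd ω') ++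
        cs.rightInvSeq ω' := by
  induction ω with
  | nil => simp
  | cons i ω ih => simp [rightInvSeq, ih, wordProd_append, mul_assoc]

theorem isRightInversion_or_of_mul {u v t : W} (h : cs.IsRightInversion (u * v) t) :
    cs.IsRightInversion v t ∨ cs.IsRightInversion u (v * t * v⁻¹) := by
  obtain ⟨ω, hω, rfl⟩ := cs.exists_isReduced u
  obtain ⟨ω', hω', rfl⟩ := cs.exists_isReduced v
  rw [← wordProd_append] at h
  have hmem := mem_rightInvSeq_of_isRightInversion h
  rw [rightInvSeq_append, List.mem_append, List.mem_map] at hmem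
  rcases hmem with ⟨r, hr, rfl⟩ | hmem
  · right
    convert cs.isRightInversion_of_mem_rightInvSeq hω hr using 1
    group
  · exact Or.inl (cs.isRightInversion_of_mem_rightInvSeq hω' hmem)

end Exchange

section AlternatingWord

theorem reverse_alternatingWord (i j : B) (k : ℕ) :
    (alternatingWord i j k).reverse =
      if Even k then alternatingWord j i k else alternatingWord i j k := by
  induction k generalizing i j with
  | zero => simp [alternatingWord]
  | succ k ih =>
    rw [alternatingWord_succ, List.concat_eq_append, List.reverse_concat, ih]
    by_cases hk : Even k
    · rw [if_pos hk, if_neg (by simpa [Nat.even_add_one] using hk), ← List.concat_eq_append,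
        ← alternatingWord_succ, alternatingWord_succ', if_pos hk]
    · rw [if_neg hk, if_pos (by simpa [Nat.even_add_one] using hk), alternatingWord_succ',
        if_neg hk]

theorem alternatingWord_suffix (i j : B) {m n : ℕ} (h : m ≤ n) :
    alternatingWord i j m <:+ alternatingWord i j n := by
  induction n, h using Nat.le_induction with
  | base => exact List.suffix_rfl
  | succ n _ ih =>
    rw [alternatingWord_succ']
    exact ih.trans (List.suffix_cons _ _)

theorem not_isRightDescent_alternatingWord {i j : B} {k : ℕ} (hk : M i j = 0 ∨ k < M i j) :
    ¬ cs.IsRightDescent (cs.wordProd (alternatingWord i j k)) i := by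
  intro h
  rw [← isRightInversion_simple_iff_isRightDescent] at h
  have hmem := mem_rightInvSeq_of_isRightInversion h
  rw [rightInvSeq_alternatingWord, List.mem_reverse, List.mem_map] at hmem
  obtain ⟨p, hp, hpi⟩ := hmem
  have hpow : (cs.simple i * cs.simple j) ^ (p + 1) = 1 := by
    rw [pow_succ', mul_assoc, hpi, simple_mul_simple_self]
  have hdvd := orderOf_dvd_of_pow_eq_one hpow
  rw [orderOf_simple_mul_simple] at hdvd
  rw [List.mem_range] at hp
  rcases hk with hk | hk
  · rw [hk, zero_dvd_iff] at hdvd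
    omega
  · exact absurd (Nat.le_of_dvd p.succ_pos hdvd) (by omega)

theorem isReduced_alternatingWord {i j : B} {k : ℕ} (hk : M i j = 0 ∨ k ≤ M i j) :
    cs.IsReduced (alternatingWord i j k) := by
  induction k generalizing i j with
  | zero => simp [alternatingWord, CoxeterSystem.IsReduced]
  | succ k ih =>
    rw [M.symmetric] at hk
    have hred := ih (i := j) (j := i) (by omega)
    have hnot := not_isRightDescent_alternatingWord cs (i := j) (j := i) (k := k) (by omega)
    rw [alternatingWord_succ, CoxeterSystem.IsReduced, wordProd_concat,
      cs.not_isRightDescent_iff.mp hnot, hred.eq, List.length_concat]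

variable {cs}

theorem exists_eq_mul_alternatingWord {w : W} {i j : B} (hi : cs.IsRightDescent w i)
    (hj : cs.IsRightDescent w j) {k : ℕ} (hk : M i j = 0 ∨ k ≤ M i j) :
    ∃ u, w = u * cs.wordProd (alternatingWord i j k) ∧ cs.length w = cs.length u + k := by
  induction k generalizing i j with
  | zero => exact ⟨w, by simp [alternatingWord], rfl⟩
  | succ k ih =>
    rw [M.symmetric] at hk
    obtain ⟨v, hw, hlen⟩ := ih hj hi (by omega)
    set x := cs.wordProd (alternatingWord j i k) with hx
    have hinv : cs.IsRightInversion v (x * cs.simple j * x⁻¹) := by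
      have hxj : ¬ cs.IsRightInversion x (cs.simple j) := by
        rw [isRightInversion_simple_iff_isRightDescent]
        exact not_isRightDescent_alternatingWord cs (by omega)
      rw [hw, ← isRightInversion_simple_iff_isRightDescent] at hj
      exact (isRightInversion_or_of_mul hj).resolve_left hxj
    have hw' : w = v * (x * cs.simple j * x⁻¹) * cs.wordProd (alternatingWord i j (k + 1)) := by
      rw [alternatingWord_succ, wordProd_concat, ← hx, hw]
      simp [mul_assoc]
    refine ⟨_, hw', ?_⟩
    have h₁ := cs.length_mul_le (v * (x * cs.simple j * x⁻¹))
      (cs.wordProd (alternatingWord i j (k + 1)))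
    have h₂ := cs.length_wordProd_le (alternatingWord i j (k + 1))
    have h₃ := hinv.2
    rw [← hw'] at h₁
    rw [length_alternatingWord] at h₂
    omega

end AlternatingWord

section ReducedProduct

/-- The product `u * v` is reduced: lengths add. Reduced products of several factors are expressed
by iterating this notion, in any bracketing by `isReducedMul_assoc`. -/
def IsReducedMul (u v : W) : Prop := cs.length (u * v) = cs.length u + cs.length v

variable {cs}

theorem isReducedMul_of_le {u v : W} (h : cs.length u + cs.length v ≤ cs.length (u * v)) :
    IsReducedMul cs u v :=
  (cs.length_mul_le u v).antisymm h

theorem isReducedMul_simple_iff {w : W} {i : B} :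
    IsReducedMul cs w (cs.simple i) ↔ ¬ cs.IsRightDescent w i := by
  rw [IsReducedMul, length_simple, not_isRightDescent_iff]

theorem isReducedMul_assoc {u v w : W} :
    IsReducedMul cs u v ∧ IsReducedMul cs (u * v) w ↔
      IsReducedMul cs v w ∧ IsReducedMul cs u (v * w) := by
  have huv := cs.length_mul_le u v
  have hvw := cs.length_mul_le v w
  have huv_w := cs.length_mul_le (u * v) w
  have hu_vw := cs.length_mul_le u (v * w)
  simp only [IsReducedMul, mul_assoc] at *
  omega

theorem IsReducedMul.isRightDescent {u v : W} {t : B} (h : IsReducedMul cs u v)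
    (ht : cs.IsRightDescent v t) : cs.IsRightDescent (u * v) t := by
  rw [IsRightDescent] at ht ⊢
  rw [h, mul_assoc]
  exact (cs.length_mul_le _ _).trans_lt (Nat.add_lt_add_left ht _)

theorem IsReducedMul.isRightDescent_of_commute {u v : W} {t : B} (h : IsReducedMul cs u v)
    (hv : Commute (cs.simple t) v) (ht : cs.IsRightDescent u t) :
    cs.IsRightDescent (u * v) t := by
  rw [IsRightDescent] at ht ⊢
  rw [h, mul_assoc, ← hv.eq, ← mul_assoc]
  exact (cs.length_mul_le _ _).trans_lt (Nat.add_lt_add_right ht _)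

end ReducedProduct

section Longest

theorem length_longest (a b : B) : cs.length (longest cs a b) = M a b := by
  rw [longest, (isReduced_alternatingWord cs (Or.inr le_rfl)).eq, length_alternatingWord]

theorem longest_comm (a b : B) : longest cs a b = longest cs b a :=
  cs.wordProd_braidWord_eq a b

theorem longest_inv (a b : B) : (longest cs a b)⁻¹ = longest cs a b := by
  rw [longest, ← wordProd_reverse, reverse_alternatingWord]
  split_ifs
  · rw [← longest, longest_comm, longest, M.symmetric]
  · rfl

theorem exists_longest_eq_mul {a b : B} (h : 3 ≤ M a b) :
    ∃ p, longest cs a b = p * cs.simple b * cs.simple a * cs.simple b ∧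
      cs.length p + 3 ≤ M a b := by
  obtain ⟨k, hk⟩ := Nat.exists_eq_add_of_le' h
  refine ⟨cs.wordProd (alternatingWord b a k), ?_, ?_⟩
  · rw [longest, hk]
    simp only [alternatingWord_succ, wordProd_concat]
  · have := cs.length_wordProd_le (alternatingWord b a k)
    rw [length_alternatingWord] at this
    omega

theorem isRightDescent_longest_right {a b : B} (h : M a b ≠ 0) :
    cs.IsRightDescent (longest cs a b) b := by
  obtain ⟨k, hk⟩ := Nat.exists_eq_succ_of_ne_zero h
  have hlen := cs.length_wordProd_le (alternatingWord b a k)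
  rw [length_alternatingWord] at hlen
  rw [IsRightDescent, length_longest, longest, hk, alternatingWord_succ, wordProd_concat,
    simple_mul_simple_cancel_right]
  omega

theorem isRightDescent_longest_left {a b : B} (h : M a b ≠ 0) :
    cs.IsRightDescent (longest cs a b) a := by
  rw [longest_comm]
  exact isRightDescent_longest_right cs (M.symmetric a b ▸ h)

variable {cs}

theorem exists_eq_mul_longest {w : W} {i j : B} (hi : cs.IsRightDescent w i)
    (hj : cs.IsRightDescent w j) :
    M i j ≠ 0 ∧ ∃ u, w = u * longest cs i j ∧ IsReducedMul cs u (longest cs i j) := by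
  constructor
  · intro h
    obtain ⟨u, -, hu⟩ := exists_eq_mul_alternatingWord hi hj (k := cs.length w + 1) (Or.inl h)
    omega
  · obtain ⟨u, hw, hu⟩ := exists_eq_mul_alternatingWord hi hj (Or.inr le_rfl)
    refine ⟨u, hw, ?_⟩
    rw [IsReducedMul, length_longest, ← hu, hw, longest]

theorem exists_eq_alternatingWord_of_isRightInversion_longest {a b : B} {r : W}
    (hr : cs.IsRightInversion (longest cs a b) r) :
    ∃ p, 2 * p + 1 ≤ M a b ∧ (r = cs.wordProd (alternatingWord a b (2 * p + 1)) ∨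
      r = cs.wordProd (alternatingWord b a (2 * p + 1))) := by
  have hmem := mem_rightInvSeq_of_isRightInversion hr
  rw [rightInvSeq_alternatingWord, List.mem_reverse, List.mem_map] at hmem
  obtain ⟨p, hp, rfl⟩ := hmem
  rw [List.mem_range] at hp
  have hpr : cs.simple b * (cs.simple a * cs.simple b) ^ p =
      cs.wordProd (alternatingWord a b (2 * p + 1)) := by
    rw [prod_alternatingWord_eq_mul_pow, if_neg (by simp), show (2 * p + 1) / 2 = p by omega]
  rcases le_or_gt (2 * p + 1) (M a b) with hle | hgt
  · exact ⟨p, hle, Or.inl hpr⟩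
  · refine ⟨M a b - p - 1, by omega, Or.inr ?_⟩
    rw [hpr, prod_alternatingWord_eq_prod_alternatingWord_sub _ _ _ _ (by omega)]
    congr 2
    omega

theorem IsReducedMul.alternatingWord_of_longest {a b : B} {x : W}
    (h : IsReducedMul cs (longest cs a b) x) {k : ℕ} (hk : k ≤ M a b) :
    IsReducedMul cs (cs.wordProd (alternatingWord a b k)) x := by
  obtain ⟨ω, hω⟩ := alternatingWord_suffix a b hk
  have hL : longest cs a b = cs.wordProd ω * cs.wordProd (alternatingWord a b k) := by
    rw [longest, ← hω, wordProd_append]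
  have hred : IsReducedMul cs (cs.wordProd ω) (cs.wordProd (alternatingWord a b k)) := by
    refine isReducedMul_of_le ?_
    have hlen := congr_arg List.length hω
    rw [List.length_append, length_alternatingWord, length_alternatingWord] at hlen
    rw [← hL, length_longest, ← hlen, (isReduced_alternatingWord cs (Or.inr hk)).eq,
      length_alternatingWord]
    exact Nat.add_le_add_right (cs.length_wordProd_le ω) k
  exact (isReducedMul_assoc.mp ⟨hred, hL ▸ h⟩).1

theorem eq_simple_of_isRightInversion_longest {a b : B} {x r : W}
    (h : IsReducedMul cs (longest cs a b) x) (hr : cs.IsRightInversion (longest cs a b) r)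
    (hrx : cs.length (r * x) ≤ cs.length x + 1) : r = cs.simple a ∨ r = cs.simple b := by
  have hshort {i j : B} (h : IsReducedMul cs (longest cs i j) x) {p : ℕ}
      (hp : 2 * p + 1 ≤ M i j) (hr : r = cs.wordProd (alternatingWord i j (2 * p + 1))) :
      r = cs.simple j := by
    have hred := h.alternatingWord_of_longest hp
    rw [IsReducedMul, (isReduced_alternatingWord cs (Or.inr hp)).eq, length_alternatingWord,
      ← hr] at hred
    obtain rfl : p = 0 := by omega
    simpa [alternatingWord] using hr
  obtain ⟨p, hp, hp' | hp'⟩ := exists_eq_alternatingWord_of_isRightInversion_longest hr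
  · exact Or.inr (hshort h hp hp')
  · exact Or.inl (hshort (longest_comm cs a b ▸ h) (M.symmetric a b ▸ hp) hp')

end Longest

theorem simple_commute_of_eq_two {c t : B} (h : M c t = 2) :
    Commute (cs.simple c) (cs.simple t) := by
  have hpow := cs.simple_mul_simple_pow c t
  rwa [h, pow_two, mul_eq_one_iff_eq_inv, mul_inv_rev, inv_simple, inv_simple] at hpow

theorem Noncomm.not_commute {s t : B} (h : Noncomm M s t) :
    ¬ Commute (cs.simple s) (cs.simple t) := by
  intro hcomm
  have hpow : (cs.simple s * cs.simple t) ^ 2 = 1 := by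
    rw [hcomm.mul_pow, simple_sq, simple_sq, one_mul]
  have hdvd := orderOf_dvd_of_pow_eq_one hpow
  rw [orderOf_simple_mul_simple] at hdvd
  rcases h with h | h
  · simp [h] at hdvd
  · exact absurd (Nat.le_of_dvd two_pos hdvd) (by omega)

section FullyCommutative

variable {cs}

theorem isComplex_of_length_le {a b : B} (hab : 3 ≤ M a b) {x₁ x₂ : W}
    (h : cs.length x₁ + M a b + cs.length x₂ ≤ cs.length (x₁ * longest cs a b * x₂)) :
    IsComplex cs (x₁ * longest cs a b * x₂) := by
  refine ⟨a, b, hab, x₁, x₂, rfl, le_antisymm ?_ (by rwa [length_longest])⟩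
  exact (cs.length_mul_le _ _).trans (Nat.add_le_add_right (cs.length_mul_le _ _) _)

theorem IsComplex.inv {w : W} (hw : IsComplex cs w) : IsComplex cs w⁻¹ := by
  obtain ⟨a, b, hab, x₁, x₂, rfl, hlen⟩ := hw
  refine ⟨a, b, hab, x₂⁻¹, x₁⁻¹, by simp [longest_inv, mul_assoc], ?_⟩
  simp only [length_inv]
  omega

theorem IsComplex.mul_right {u v : W} (hu : IsComplex cs u) (h : IsReducedMul cs u v) :
    IsComplex cs (u * v) := by
  obtain ⟨a, b, hab, x₁, x₂, rfl, hlen⟩ := hu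
  rw [length_longest] at hlen
  have hlen' := cs.length_mul_le x₂ v
  rw [IsReducedMul] at h
  rw [mul_assoc _ x₂] at h ⊢
  exact isComplex_of_length_le hab (by omega)

theorem FullyComm.inv {w : W} (hw : FullyComm cs w) : FullyComm cs w⁻¹ := fun h =>
  hw (inv_inv w ▸ h.inv)

theorem FullyComm.left_of_mul {u v : W} (huv : FullyComm cs (u * v))
    (h : IsReducedMul cs u v) : FullyComm cs u := fun hu =>
  huv (hu.mul_right h)

theorem FullyComm.mul_simple_of_isRightDescent {w : W} {i : B} (hw : FullyComm cs w)
    (hi : cs.IsRightDescent w i) : FullyComm cs (w * cs.simple i) := by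
  refine FullyComm.left_of_mul (v := cs.simple i) (by rwa [simple_mul_simple_cancel_right]) ?_
  rwa [isReducedMul_simple_iff, ← isRightDescent_iff_not_isRightDescent_mul]

theorem FullyComm.eq_two_of_isRightDescent {w : W} (hw : FullyComm cs w) {c t : B}
    (hct : c ≠ t) (hc : cs.IsRightDescent w c) (ht : cs.IsRightDescent w t) : M c t = 2 := by
  obtain ⟨h₀, u, rfl, hu⟩ := exists_eq_mul_longest hc ht
  have h₁ := M.off_diagonal c t hct
  by_contra h₂
  rw [IsReducedMul, length_longest, ← mul_one (u * _)] at hu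
  rw [← mul_one (u * _)] at hw
  exact hw (isComplex_of_length_le (by omega) (by rw [hu, length_one, add_zero]))

theorem FullyComm.eq_or_of_isRightDescent_mul_simple {u : W} {c t : B}
    (hu : FullyComm cs (u * cs.simple c)) (hc : ¬ cs.IsRightDescent u c)
    (ht : cs.IsRightDescent (u * cs.simple c) t) :
    c = t ∨ Commute (cs.simple t) (cs.simple c) ∧ cs.IsRightDescent u t := by
  refine or_iff_not_imp_left.mpr fun hct => ?_
  have hcomm : Commute (cs.simple t) (cs.simple c) := by
    rw [isRightDescent_iff_not_isRightDescent_mul, not_not] at hc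
    exact (simple_commute_of_eq_two cs (hu.eq_two_of_isRightDescent hct hc ht)).symm
  refine ⟨hcomm, ?_⟩
  rw [← isRightInversion_simple_iff_isRightDescent] at ht ⊢
  have hct' : ¬ cs.IsRightInversion (cs.simple c) (cs.simple t) := by
    rw [isRightInversion_simple_iff_isRightDescent, IsRightDescent, length_simple, Nat.lt_one_iff,
      length_eq_zero_iff, mul_eq_one_iff_eq_inv, inv_simple]
    exact fun h => hct (simple_injective cs h)
  have h := (isRightInversion_or_of_mul ht).resolve_left hct'
  rwa [← hcomm.eq, mul_inv_cancel_right] at h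

theorem FullyComm.isRightDescent_or_commute {u v : W} {t : B} (hw : FullyComm cs (u * v))
    (h : IsReducedMul cs u v) (ht : cs.IsRightDescent (u * v) t) :
    cs.IsRightDescent v t ∨ Commute (cs.simple t) v ∧ cs.IsRightDescent u t := by
  induction hn : cs.length v generalizing v with
  | zero =>
    obtain rfl := cs.length_eq_zero_iff.mp hn
    rw [mul_one] at ht
    exact Or.inr ⟨Commute.one_right _, ht⟩
  | succ n ih =>
    have hv : v ≠ 1 := by
      rintro rfl
      simp at hn
    obtain ⟨c, hc⟩ := cs.exists_rightDescent_of_ne_one hv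
    obtain ⟨v', rfl⟩ : ∃ v', v = v' * cs.simple c := ⟨v * cs.simple c, by simp⟩
    have hv' : IsReducedMul cs v' (cs.simple c) := by
      rwa [isReducedMul_simple_iff, isRightDescent_iff_not_isRightDescent_mul, not_not]
    obtain ⟨huv', huvc⟩ := isReducedMul_assoc.mpr ⟨hv', h⟩
    rw [← mul_assoc] at hw ht
    rcases hw.eq_or_of_isRightDescent_mul_simple (isReducedMul_simple_iff.mp huvc) ht with
      rfl | ⟨hcomm, ht'⟩
    · exact Or.inl hc
    · have hn' : cs.length v' = n := by
        rw [hv', length_simple] at hn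
        omega
      rcases ih (hw.left_of_mul huvc) huv' ht' hn' with htv' | ⟨hcomm', htu⟩
      · exact Or.inl (hv'.isRightDescent_of_commute hcomm htv')
      · exact Or.inr ⟨hcomm'.mul_right hcomm, htu⟩

theorem IsComplex.exists_mul_simple_eq_simple_mul {y : W} {s : B} (hy : IsComplex cs y)
    (hs : cs.IsRightDescent y s) (hys : FullyComm cs (y * cs.simple s)) :
    ∃ a b x₁ x₂, 3 ≤ M a b ∧ y = x₁ * longest cs a b * x₂ ∧
      cs.length y = cs.length x₁ + M a b + cs.length x₂ ∧
      x₂ * cs.simple s = cs.simple b * x₂ := by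
  obtain ⟨a, b, hab, x₁, x₂, rfl, hlen⟩ := hy
  rw [length_longest] at hlen
  have hlen' := cs.isRightDescent_iff.mp hs
  have hfactor {x₁' x₂' : W} (hx : x₁' * longest cs a b * x₂' =
      x₁ * longest cs a b * x₂ * cs.simple s)
      (hle : cs.length x₁' + cs.length x₂' < cs.length x₁ + cs.length x₂) : False := by
    rw [← hx] at hys hlen'
    exact hys (isComplex_of_length_le hab (by omega))
  rw [← isRightInversion_simple_iff_isRightDescent] at hs
  rcases isRightInversion_or_of_mul hs with hinv | hinv
  · exact (hfactor (mul_assoc _ x₂ _).symm (Nat.add_lt_add_left hinv.2 _)).elim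
  rcases isRightInversion_or_of_mul hinv with hinv' | hinv'
  · have hconj : x₂ * cs.simple s * x₂⁻¹ * x₂ = x₂ * cs.simple s := inv_mul_cancel_right _ _
    have hred : IsReducedMul cs (longest cs a b) x₂ := by
      refine isReducedMul_of_le ?_
      have h := cs.length_mul_le x₁ (longest cs a b * x₂)
      rw [← mul_assoc] at h
      rw [length_longest]
      omega
    have hle : cs.length (x₂ * cs.simple s * x₂⁻¹ * x₂) ≤ cs.length x₂ + 1 := by
      rw [hconj, ← cs.length_simple s]
      exact cs.length_mul_le _ _
    rcases eq_simple_of_isRightInversion_longest hred hinv' hle with hr | hr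
    · exact ⟨b, a, x₁, x₂, M.symmetric a b ▸ hab, longest_comm cs a b ▸ rfl,
        M.symmetric a b ▸ hlen, by rw [← hconj, hr]⟩
    · exact ⟨a, b, x₁, x₂, hab, rfl, hlen, by rw [← hconj, hr]⟩
  · refine (hfactor (x₁' := x₁ * _) ?_ (Nat.add_lt_add_right hinv'.2 _)).elim
    simp [mul_assoc]

theorem FullyComm.isRightDescent_or_commute_of_mul_mul {z x : W} {a b t : B}
    (hw : FullyComm cs (z * cs.simple b * cs.simple a * x)) (hab : 3 ≤ M a b)
    (hlen : cs.length z + 2 + cs.length x ≤ cs.length (z * cs.simple b * cs.simple a * x))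
    (ht : cs.IsRightDescent (z * cs.simple b * cs.simple a * x) t) :
    cs.IsRightDescent x t ∨
      Commute (cs.simple t) x ∧ (a = t ∨ Commute (cs.simple t) (cs.simple b)) := by
  have hzb := cs.length_mul_simple z b
  have hzba := cs.length_mul_simple (z * cs.simple b) a
  have hzbax := cs.length_mul_le (z * cs.simple b * cs.simple a) x
  have hred : IsReducedMul cs (z * cs.simple b * cs.simple a) x := isReducedMul_of_le (by omega)
  refine (hw.isRightDescent_or_commute hred ht).imp_right fun ⟨htx, ht'⟩ => ⟨htx, ?_⟩
  have ha : ¬ cs.IsRightDescent (z * cs.simple b) a := by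
    rw [not_isRightDescent_iff]
    omega
  have hb : ¬ cs.IsRightDescent z b := by
    rw [not_isRightDescent_iff]
    omega
  have hzba' := hw.left_of_mul hred
  refine (hzba'.eq_or_of_isRightDescent_mul_simple ha ht').imp_right fun ⟨hta, htb⟩ => ?_
  have hbt : b ≠ t := by
    rintro rfl
    exact Noncomm.not_commute cs (Or.inr hab) hta.symm
  have hzb' := hzba'.left_of_mul (isReducedMul_simple_iff.mpr ha)
  exact ((hzb'.eq_or_of_isRightDescent_mul_simple hb htb).resolve_left hbt).1

theorem FullyComm.of_mul_simple_of_noncomm {y : W} {s t : B} (hys : FullyComm cs (y * cs.simple s))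
    (hst : Noncomm M s t) (hs : cs.IsRightDescent y s) (ht : ¬ cs.IsRightDescent y t)
    (ht' : cs.IsRightDescent (y * cs.simple s) t) : FullyComm cs y := by
  intro hy
  obtain ⟨a, b, x₁, x, hab, rfl, hlen, hx⟩ := hy.exists_mul_simple_eq_simple_mul hs hys
  obtain ⟨p, hL, hp⟩ := exists_longest_eq_mul cs hab
  have hred : IsReducedMul cs x₁ (longest cs a b) ∧ IsReducedMul cs (x₁ * longest cs a b) x := by
    have hx₁L := cs.length_mul_le x₁ (longest cs a b)
    have hx₁Lx := cs.length_mul_le (x₁ * longest cs a b) x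
    rw [length_longest] at hx₁L
    rw [IsReducedMul, IsReducedMul, length_longest]
    omega
  have hys_eq : x₁ * longest cs a b * x * cs.simple s =
      x₁ * p * cs.simple b * cs.simple a * x := by
    rw [mul_assoc, hx, hL]
    simp only [mul_assoc, simple_mul_simple_cancel_left]
  have hlen_ys := cs.isRightDescent_iff.mp hs
  have hlen_x₁p := cs.length_mul_le x₁ p
  rw [hys_eq] at hys ht' hlen_ys
  rcases hys.isRightDescent_or_commute_of_mul_mul hab (by omega) ht' with htx | ⟨htx, rfl | htb⟩
  · exact ht (hred.2.isRightDescent htx)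
  · exact ht (hred.2.isRightDescent_of_commute htx
      (hred.1.isRightDescent (isRightDescent_longest_left cs (by omega))))
  · have hs_eq : cs.simple s = x⁻¹ * cs.simple b * x := by
      rw [mul_assoc, ← hx, inv_mul_cancel_left]
    refine hst.not_commute cs ?_
    rw [hs_eq]
    exact ((htx.inv_right.mul_right htb).mul_right htx).symm

end FullyCommutative

section StarReduction

variable {cs}

theorem RightStarReducible.exists_generators {s t : B} {y x : W}
    (h : RightStarReducible cs s t y x) :
    ∃ i j, Noncomm M i j ∧ cs.IsRightDescent y i ∧ ¬ cs.IsRightDescent y j ∧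
      x = y * cs.simple i ∧ cs.IsRightDescent x j := by
  rcases h with ⟨hst, h | h⟩
  · exact ⟨s, t, hst, h⟩
  · exact ⟨t, s, by rwa [Noncomm, M.symmetric], h⟩

theorem FullyComm.of_rightStarReducible_from {y x : W} {s t : B} (hy : FullyComm cs y)
    (h : RightStarReducible cs s t y x) : FullyComm cs x := by
  obtain ⟨i, j, -, hi, -, rfl, -⟩ := h.exists_generators
  exact hy.mul_simple_of_isRightDescent hi

theorem FullyComm.of_rightStarReducible_to {y x : W} {s t : B} (hx : FullyComm cs x)
    (h : RightStarReducible cs s t y x) : FullyComm cs y := by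
  obtain ⟨i, j, hij, hi, hj, rfl, hj'⟩ := h.exists_generators
  exact hx.of_mul_simple_of_noncomm hij hi hj hj'

theorem LeftStarReducible.inv {s t : B} {y x : W} (h : LeftStarReducible cs s t y x) :
    RightStarReducible cs s t y⁻¹ x⁻¹ := by
  simp only [RightStarReducible, isRightDescent_inv_iff]
  rcases h with ⟨hst, ⟨hs, ht, rfl, ht'⟩ | ⟨ht, hs, rfl, hs'⟩⟩
  · exact ⟨hst, Or.inl ⟨hs, ht, by simp, ht'⟩⟩
  · exact ⟨hst, Or.inr ⟨ht, hs, by simp, hs'⟩⟩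

end StarReduction

/-- Lemma 4.6: let `w` be fully commutative and `{s,t}` a pair of generators with
`m(s,t) ≥ 3`.  If `^*w` (respectively `_*w`, `w^*`, `w_*`) is defined, then it lies in
`W_c`.  Equivalently: any element to which `w` is left or right star reducible (this is
`_*w`, resp. `w_*`), and any element that is left or right star reducible to `w` (this is
`^*w`, resp. `w^*`), is fully commutative. -/
theorem statement3 (w : W) (hw : FullyComm cs w) (s t : B) :
    (∀ x : W, LeftStarReducible cs s t w x → FullyComm cs x) ∧
    (∀ y : W, LeftStarReducible cs s t y w → FullyComm cs y) ∧
    (∀ x : W, RightStarReducible cs s t w x → FullyComm cs x) ∧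
    (∀ y : W, RightStarReducible cs s t y w → FullyComm cs y) := by
  refine ⟨fun x h => ?_, fun y h => ?_, fun x h => hw.of_rightStarReducible_from h,
    fun y h => hw.of_rightStarReducible_to h⟩
  · exact inv_inv x ▸ (hw.inv.of_rightStarReducible_from h.inv).inv
  · exact inv_inv y ▸ (hw.inv.of_rightStarReducible_to h.inv).inv
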